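/- arXiv:2304.03398 — 4 statements merged into one kernel-verified Lean document; each statement's English description precedes it below -/
import Mathlib

section
/- Let N ≥ 1 and let s_1, …, s_{N+1} be real numbers, and let k be an integer with 1 ≤ k ≤ N. Denote by q_N the k-th smallest value among s_1, …, s_N and by q_{N+1} the k-th smallest value among s_1, …, s_{N+1}. Then s_{N+1} > q_N if and only if s_{N+1} > q_{N+1}. -/
/-- The `k`-th smallest value (counting multiplicities) of a list of reals:
the `k`-th entry of the list sorted in nondecreasing order. -/
noncomputable def kthSmallest (l : List ℝ) (k : ℕ) : ℝ :=
  (l.mergeSort (fun a b => @decide (a ≤ b) (Classical.propDecidable _))).getD (k - 1) 0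

/-!
The `k`-th smallest value of a list is below `x` exactly when at least `k` entries are below `x`.
Appending `x` itself does not change the number of entries below `x`.
-/

theorem getElem_iff_lt_countP_of_pairwise {α : Type*} {p : α → Bool} {l : List α}
    (hl : l.Pairwise fun a b => p b → p a) {i : ℕ} (hi : i < l.length) :
    p l[i] ↔ i < l.countP p := by
  induction l generalizing i with
  | nil => simp at hi
  | cons a t ih =>
    obtain ⟨ha, ht⟩ := List.pairwise_cons.mp hl
    by_cases hpa : p a
    · rw [List.countP_cons_of_pos hpa]
      cases i with
      | zero => simpa using hpa
      | succ i => simpa using ih ht (Nat.lt_of_succ_lt_succ hi)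
    · have none_satisfies : ∀ b ∈ a :: t, ¬ p b :=
        List.forall_mem_cons.mpr ⟨hpa, fun b hb hpb => hpa (ha b hb hpb)⟩
      rw [List.countP_eq_zero.mpr none_satisfies]
      exact iff_of_false (none_satisfies _ (List.getElem_mem hi)) (Nat.not_lt_zero i)

theorem kthSmallest_lt_iff_le_countP {l : List ℝ} {k : ℕ} (hk1 : 1 ≤ k) (hk : k ≤ l.length)
    (x : ℝ) : kthSmallest l k < x ↔ k ≤ l.countP (· < x) := by
  let sorted := l.mergeSort fun a b => @decide (a ≤ b) (Classical.propDecidable _)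
  have sorted_perm : sorted.Perm l := List.mergeSort_perm l _
  have sorted_pairwise : sorted.Pairwise (· ≤ ·) :=
    @List.pairwise_mergeSort' ℝ (· ≤ ·) (fun _ _ => Classical.propDecidable _) _ _ l
  have lt_of_later_lt : sorted.Pairwise fun a b => decide (b < x) → decide (a < x) :=
    sorted_pairwise.imp fun hab hb => decide_eq_true (hab.trans_lt (of_decide_eq_true hb))
  have index_lt : k - 1 < sorted.length := by rw [sorted_perm.length_eq]; omega
  calc kthSmallest l k < x
      ↔ sorted[k - 1] < x := by rw [kthSmallest, List.getD_eq_getElem _ _ index_lt]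
    _ ↔ k - 1 < sorted.countP (· < x) := by
        rw [← getElem_iff_lt_countP_of_pairwise lt_of_later_lt index_lt, decide_eq_true_iff]
    _ ↔ k ≤ l.countP (· < x) := by rw [sorted_perm.countP_eq]; omega

/-- Quantile-equivalence identity: for reals `s 0, …, s N` and `1 ≤ k ≤ N`,
`s (N+1) > (k-th smallest of the first N)` iff
`s (N+1) > (k-th smallest of all N+1)`. -/
theorem quantile_equivalence (N : ℕ) (hN : 1 ≤ N) (s : Fin (N + 1) → ℝ)
    (k : ℕ) (hk1 : 1 ≤ k) (hk2 : k ≤ N) :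
    kthSmallest (List.ofFn fun i : Fin N => s i.castSucc) k < s (Fin.last N) ↔
      kthSmallest (List.ofFn s) k < s (Fin.last N) := by
  have countP_eq : (List.ofFn s).countP (· < s (Fin.last N)) =
      (List.ofFn fun i : Fin N => s i.castSucc).countP (· < s (Fin.last N)) := by
    rw [List.ofFn_succ', List.concat_eq_append, List.countP_append,
      List.countP_singleton, if_neg (by simp), Nat.add_zero]
  rw [kthSmallest_lt_iff_le_countP hk1 (by simpa using hk2),
    kthSmallest_lt_iff_le_countP hk1 (by simpa using Nat.le_succ_of_le hk2), countP_eq]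
end

section
/- Let s_1, …, s_{N+1} be exchangeable real-valued random variables and let α ∈ (0,1) satisfy α ≥ 1/(N+1). Set k = ⌈(1−α)(N+1)⌉ and let Q*_{1−α} denote the k-th smallest value among all of s_1, …, s_{N+1}. Then Pr( s_{N+1} ≤ Q*_{1−α} ) ≥ 1 − α. -/
open MeasureTheory

/-- Real-valued random variables `s 0, …, s (n-1)` are exchangeable if the joint
distribution of any permutation of them equals the original joint distribution. -/
def Exchangeable {Ω : Type*} [MeasurableSpace Ω] (P : Measure Ω) {n : ℕ}
    (s : Fin n → Ω → ℝ) : Prop :=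
  ∀ π : Equiv.Perm (Fin n),
    Measure.map (fun ω i => s (π i) ω) P = Measure.map (fun ω i => s i ω) P

/-! By exchangeability the events `s i ≤ Q`, with `Q` the `k`-th smallest of `n` values, have the
same probability for every `i`, because `Q` is a symmetric function of the values. At every sample
point at least `k` of them occur, so the sum of their `n` equal probabilities is at least `k`. -/

open ProbabilityTheory
open scoped Finset

theorem getElem_le_iff_lt_countP_of_sortedLE {β : Type*} [LinearOrder β] {l : List β}
    (hl : l.SortedLE) (c : β) {m : ℕ} (hm : m < l.length) : l[m] ≤ c ↔ m < l.countP (· ≤ c) := by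
  induction l generalizing m with
  | nil => simp at hm
  | cons a l ih =>
    obtain ⟨ha, hl⟩ := List.pairwise_cons.mp hl.pairwise
    rcases le_or_gt a c with hac | hac
    · cases m with
      | zero => simp [hac]
      | succ m => simpa [hac] using ih hl.sortedLE (by simpa using hm)
    · have all_gt : ∀ b ∈ a :: l, c < b :=
        List.forall_mem_cons.mpr ⟨hac, fun b hb => hac.trans_le (ha b hb)⟩
      have count_zero : (a :: l).countP (· ≤ c) = 0 :=
        List.countP_eq_zero.mpr fun b hb => by simpa using all_gt b hb
      simpa [count_zero] using all_gt _ (List.getElem_mem hm)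

theorem countP_ofFn_eq_card_filter {β : Type*} {n : ℕ} (x : Fin n → β) (p : β → Prop)
    [DecidablePred p] : (List.ofFn x).countP (p ·) = #{i | p (x i)} := by
  rw [← Multiset.coe_countP, ← Fin.univ_val_map, Multiset.countP_map, Finset.card_def,
    Finset.filter_val]

theorem kthSmallest_eq_getD_mergeSort (l : List ℝ) (k : ℕ) :
    kthSmallest l k = (l.mergeSort (· ≤ ·)).getD (k - 1) 0 := by
  unfold kthSmallest
  congr!

theorem kthSmallest_eq_of_perm {l l' : List ℝ} (h : l.Perm l') (k : ℕ) :
    kthSmallest l k = kthSmallest l' k := by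
  have sorted_eq : l.mergeSort (· ≤ ·) = l'.mergeSort (· ≤ ·) :=
    ((l.mergeSort_perm _).trans (h.trans (l'.mergeSort_perm _).symm)).eq_of_sortedLE
      List.sortedLE_mergeSort List.sortedLE_mergeSort
  rw [kthSmallest_eq_getD_mergeSort, kthSmallest_eq_getD_mergeSort, sorted_eq]

-- Truncated subtraction makes `kthSmallest l 0` equal to `kthSmallest l 1`, so `k = 0` is covered.
theorem kthSmallest_le_iff {l : List ℝ} {k : ℕ} (hk : k - 1 < l.length) (c : ℝ) :
    kthSmallest l k ≤ c ↔ k - 1 < l.countP (· ≤ c) := by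
  have hk' : k - 1 < (l.mergeSort (· ≤ ·)).length := by rwa [List.length_mergeSort]
  rw [kthSmallest_eq_getD_mergeSort, List.getD_eq_getElem _ _ hk',
    getElem_le_iff_lt_countP_of_sortedLE List.sortedLE_mergeSort, (l.mergeSort_perm _).countP_eq]

theorem le_countP_kthSmallest {l : List ℝ} {k : ℕ} (hk : k ≤ l.length) :
    k ≤ l.countP (· ≤ kthSmallest l k) := by
  rcases k.eq_zero_or_pos with rfl | hk0
  · exact Nat.zero_le _
  · exact Nat.le_of_pred_lt ((kthSmallest_le_iff (by omega) _).mp le_rfl)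

theorem measurable_kthSmallest_ofFn (n k : ℕ) :
    Measurable fun x : Fin n → ℝ => kthSmallest (List.ofFn x) k := by
  rcases lt_or_ge (k - 1) n with hk | hk
  · refine measurable_of_Iic fun c => ?_
    have measurable_count : Measurable fun x : Fin n → ℝ => #{i | x i ≤ c} := by
      simp only [Finset.card_filter]
      exact Finset.measurable_sum _ fun i _ => Measurable.ite
        (measurableSet_le (measurable_pi_apply i) measurable_const) measurable_const
        measurable_const
    convert measurableSet_lt (measurable_const (a := k - 1)) measurable_count using 1
    ext x
    rw [Set.mem_preimage, Set.mem_Iic, kthSmallest_le_iff (by simpa using hk),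
      countP_ofFn_eq_card_filter, Set.mem_ofPred_eq]
  · convert measurable_const (a := (0 : ℝ)) using 2 with x
    rw [kthSmallest_eq_getD_mergeSort, List.getD_eq_default _ _ (by simpa using hk)]

theorem mul_measure_univ_le_sum_measure {Ω ι : Type*} [MeasurableSpace Ω] [Fintype ι]
    {μ : Measure Ω} {A : ι → Set Ω} (hA : ∀ i, NullMeasurableSet (A i) μ) {k : ℕ}
    [∀ ω, DecidablePred fun i => ω ∈ A i] (hk : ∀ ω, k ≤ #{i | ω ∈ A i}) :
    k * μ Set.univ ≤ ∑ i, μ (A i) :=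
  calc k * μ Set.univ = ∫⁻ _, k ∂μ := (lintegral_const _).symm
    _ ≤ ∫⁻ ω, ∑ i, (A i).indicator 1 ω ∂μ := lintegral_mono fun ω => by
      simpa [Set.indicator_apply] using hk ω
    _ = ∑ i, ∫⁻ ω, (A i).indicator 1 ω ∂μ :=
      lintegral_finsetSum' _ fun i _ => aemeasurable_const.indicator₀ (hA i)
    _ = ∑ i, μ (A i) := Finset.sum_congr rfl fun i _ => lintegral_indicator_one₀ (hA i)

namespace Exchangeable

variable {Ω : Type*} [MeasurableSpace Ω] {P : Measure Ω} {n : ℕ} {s : Fin n → Ω → ℝ}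

theorem identDistrib_perm (h : Exchangeable P s) (hs : ∀ i, AEMeasurable (s i) P)
    (π : Equiv.Perm (Fin n)) :
    IdentDistrib (fun ω i => s (π i) ω) (fun ω i => s i ω) P P where
  aemeasurable_fst := aemeasurable_pi_lambda _ fun i => hs (π i)
  aemeasurable_snd := aemeasurable_pi_lambda _ hs
  map_eq := h π

theorem measure_le_eq_of_symmetric (h : Exchangeable P s) (hs : ∀ i, AEMeasurable (s i) P)
    {q : (Fin n → ℝ) → ℝ} (hq : Measurable q)
    (hq_symm : ∀ (π : Equiv.Perm (Fin n)) x, q (x ∘ π) = q x) (i j : Fin n) :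
    P {ω | s i ω ≤ q fun l => s l ω} = P {ω | s j ω ≤ q fun l => s l ω} := by
  have measure_swap_eq := (h.identDistrib_perm hs (Equiv.swap i j)).measure_mem_eq
    (measurableSet_le (measurable_pi_apply j) hq)
  have q_swap (ω : Ω) : q (fun l => s (Equiv.swap i j l) ω) = q fun l => s l ω :=
    hq_symm (Equiv.swap i j) fun l => s l ω
  simpa [q_swap] using measure_swap_eq

theorem mul_measure_univ_le_mul_measure_le_kthSmallest (h : Exchangeable P s)
    (hs : ∀ i, AEMeasurable (s i) P) {k : ℕ} (hk : k ≤ n) (i : Fin n) :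
    k * P Set.univ ≤ n * P {ω | s i ω ≤ kthSmallest (List.ofFn fun j => s j ω) k} := by
  have measurable_quantile := measurable_kthSmallest_ofFn n k
  have at_least_k (ω : Ω) : k ≤ #{j | s j ω ≤ kthSmallest (List.ofFn fun l => s l ω) k} := by
    have le_count := le_countP_kthSmallest (l := List.ofFn fun j => s j ω) (by simpa using hk)
    rwa [countP_ofFn_eq_card_filter] at le_count
  have quantile_symm (π : Equiv.Perm (Fin n)) (x : Fin n → ℝ) :
      kthSmallest (List.ofFn (x ∘ π)) k = kthSmallest (List.ofFn x) k :=
    kthSmallest_eq_of_perm (π.ofFn_comp_perm x) k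
  calc k * P Set.univ
      ≤ ∑ j, P {ω | s j ω ≤ kthSmallest (List.ofFn fun l => s l ω) k} :=
        mul_measure_univ_le_sum_measure (fun j => nullMeasurableSet_le (hs j)
          (measurable_quantile.comp_aemeasurable (aemeasurable_pi_lambda _ hs))) at_least_k
    _ = ∑ _j : Fin n, P {ω | s i ω ≤ kthSmallest (List.ofFn fun l => s l ω) k} :=
        Finset.sum_congr rfl fun j _ =>
          h.measure_le_eq_of_symmetric hs measurable_quantile quantile_symm j i
    _ = n * P {ω | s i ω ≤ kthSmallest (List.ofFn fun j => s j ω) k} := by simp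

end Exchangeable

theorem coverage_with_augmented_quantile_general {Ω : Type*} [MeasurableSpace Ω] (P : Measure Ω)
    [IsProbabilityMeasure P] {n : ℕ} (s : Fin n → Ω → ℝ) (hs : ∀ i, AEMeasurable (s i) P)
    (hexch : Exchangeable P s) (α : ℝ) (hα : 0 ≤ α) (i : Fin n) :
    1 - α ≤ P.real {ω | s i ω ≤ kthSmallest (List.ofFn fun j => s j ω) ⌈(1 - α) * n⌉₊} := by
  set k := ⌈(1 - α) * n⌉₊
  have hn : (0 : ℝ) < n := Nat.cast_pos.mpr i.pos
  have hk : k ≤ n := Nat.ceil_le.mpr (mul_le_of_le_one_left hn.le (by linarith))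
  have rank_bound :
      (k : ℝ) ≤ n * P.real {ω | s i ω ≤ kthSmallest (List.ofFn fun j => s j ω) k} := by
    simpa [Measure.real] using ENNReal.toReal_mono (by finiteness)
      (hexch.mul_measure_univ_le_mul_measure_le_kthSmallest hs hk i)
  refine le_of_mul_le_mul_left ?_ hn
  calc n * (1 - α) = (1 - α) * n := mul_comm _ _
    _ ≤ k := Nat.le_ceil _
    _ ≤ n * P.real {ω | s i ω ≤ kthSmallest (List.ofFn fun j => s j ω) k} := rank_bound

/-- If `s 1, …, s (N+1)` are exchangeable and `α ∈ (0,1)` with `α ≥ 1/(N+1)`, then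
with `k = ⌈(1-α)(N+1)⌉` and `Q*` the `k`-th smallest among all `N+1` variables,
`Pr(s (N+1) ≤ Q*) ≥ 1 - α`. -/
theorem coverage_with_augmented_quantile
    {Ω : Type*} [MeasurableSpace Ω] (P : Measure Ω) [IsProbabilityMeasure P]
    (N : ℕ) (s : Fin (N + 1) → Ω → ℝ) (hmeas : ∀ i, Measurable (s i))
    (hexch : Exchangeable P s)
    (α : ℝ) (hα0 : 0 < α) (hα1 : α < 1) (hαN : 1 / ((N : ℝ) + 1) ≤ α) :
    ENNReal.ofReal (1 - α) ≤
      P {ω | s (Fin.last N) ω ≤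
        kthSmallest (List.ofFn fun i => s i ω) ⌈(1 - α) * ((N : ℝ) + 1)⌉₊} := by
  rw [ENNReal.ofReal_le_iff_le_toReal (measure_ne_top _ _)]
  exact_mod_cast coverage_with_augmented_quantile_general P s (fun i => (hmeas i).aemeasurable)
    hexch α hα0.le (Fin.last N)
end

section
/- (Quantile lemma) Let s_1, …, s_{N+1} be exchangeable real-valued random variables and let α ∈ (0,1) satisfy α ≥ 1/(N+1). Set k = ⌈(1−α)(N+1)⌉ and let Q_{1−α}({s_i}_{i=1}^N) denote the k-th smallest value among the first N variables s_1, …, s_N. Then Pr( s_{N+1} ≤ Q_{1−α}({s_i}_{i=1}^N) ) ≥ 1 − α. -/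
open MeasureTheory

/-!
With `k = ⌈(1 - α)(N + 1)⌉ ≤ N`, the event `s_{N+1} ≤ Q` says that fewer than `k` of the variables
lie strictly below `s_{N+1}`. In every realization at least `k` of the `N + 1` indices `j` have
fewer than `k` variables strictly below `s_j`, while by exchangeability these `N + 1` events are
equally likely. Hence each of them has probability at least `k / (N + 1) ≥ 1 - α`.
-/

open scoped Finset ENNReal

section TupleRank

variable {ι κ α : Type*} [Fintype ι] [Fintype κ] [LinearOrder α]

/-- The rank of the `j`-th coordinate of a tuple, counted from zero. Tied coordinates share the
lowest of their ranks, so that for `k ≤ card ι` at least `k` coordinates have rank below `k`, and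
possibly more. -/
def tupleRank (x : ι → α) (j : ι) : ℕ :=
  #{i | x i < x j}

lemma tupleRank_comp_equiv (x : κ → α) (e : ι ≃ κ) (j : ι) :
    tupleRank (x ∘ e) j = tupleRank x (e j) :=
  Finset.card_equiv e (by simp)

lemma le_card_tupleRank_lt (x : ι → α) {k : ℕ} (hk : k ≤ Fintype.card ι) :
    k ≤ #{j | tupleRank x j < k} := by
  by_contra! hlt
  obtain ⟨m, hm⟩ : ∃ m, k ≤ tupleRank x m := by
    by_contra! hall
    simp [hall, hk.not_gt] at hlt
  -- If `x j` is minimal among those of rank at least `k`, whatever is below it is counted in `hlt`.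
  obtain ⟨j, hj, hmin⟩ :=
    Finset.exists_min_image {j | k ≤ tupleRank x j} x ⟨m, by simpa using hm⟩
  simp only [Finset.mem_filter_univ] at hj hmin
  have below_subset : ({i | x i < x j} : Finset ι) ⊆ ({i | tupleRank x i < k} : Finset ι) := by
    intro i
    simpa using fun hij => lt_of_not_ge fun hi => (hmin i hi).not_gt hij
  exact (hj.trans (Finset.card_le_card below_subset)).not_gt hlt

lemma measurable_tupleRank [MeasurableSpace α] [TopologicalSpace α] [OpensMeasurableSpace α]
    [OrderClosedTopology α] [SecondCountableTopology α] (j : ι) :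
    Measurable fun x : ι → α => tupleRank x j := by
  simp only [tupleRank, Finset.card_filter]
  exact Finset.measurable_sum _ fun i _ =>
    Measurable.ite (measurableSet_lt (measurable_pi_apply i) (measurable_pi_apply j))
      measurable_const measurable_const

lemma measurableSet_tupleRank_lt [MeasurableSpace α] [TopologicalSpace α] [OpensMeasurableSpace α]
    [OrderClosedTopology α] [SecondCountableTopology α] (j : ι) (k : ℕ) :
    MeasurableSet {x : ι → α | tupleRank x j < k} :=
  measurable_tupleRank j measurableSet_Iio

end TupleRank

section OrderStatistic

lemma countP_ofFn_eq_card {α : Type*} {n : ℕ} (f : Fin n → α) (p : α → Prop) [DecidablePred p] :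
    (List.ofFn f).countP (fun a => decide (p a)) = #{i | p (f i)} := by
  rw [List.ofFn_eq_map, List.countP_map, List.countP_eq_length_filter]
  rfl

lemma lt_countP_lt_iff_getElem_lt {α : Type*} [LinearOrder α] {l : List α} (hl : l.SortedLE)
    (x : α) {i : ℕ} (hi : i < l.length) :
    i < l.countP (fun a => decide (a < x)) ↔ l[i] < x := by
  conv_lhs => rw [← List.ofFn_get l, countP_ofFn_eq_card l.get (· < x)]
  exact Tuple.lt_card_lt_iff_apply_lt_of_monotone (j := ⟨i, hi⟩) hl

lemma le_kthSmallest_iff {l : List ℝ} {k : ℕ} (hk : 1 ≤ k) (hkl : k ≤ l.length) (x : ℝ) :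
    x ≤ kthSmallest l k ↔ l.countP (fun a => decide (a < x)) < k := by
  have hlt : k - 1 < (l.mergeSort (· ≤ ·)).length := by
    rw [List.length_mergeSort]
    lia
  have hsorted : (l.mergeSort (· ≤ ·)).SortedLE := (l.pairwise_mergeSort' (· ≤ ·)).sortedLE
  have hkth : kthSmallest l k = (l.mergeSort (· ≤ ·))[k - 1] := by
    rw [← List.getD_eq_getElem _ 0 hlt, kthSmallest]
  rw [hkth, ← not_lt, ← lt_countP_lt_iff_getElem_lt hsorted, (l.mergeSort_perm _).countP_eq]
  lia

lemma le_kthSmallest_ofFn_castSucc_iff {N k : ℕ} (x : Fin (N + 1) → ℝ) (hk : 1 ≤ k) (hkN : k ≤ N) :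
    x (Fin.last N) ≤ kthSmallest (List.ofFn fun i : Fin N => x i.castSucc) k ↔
      tupleRank x (Fin.last N) < k := by
  rw [le_kthSmallest_iff hk (by simpa using hkN), countP_ofFn_eq_card _ (· < x (Fin.last N))]
  simp [tupleRank, Finset.card_filter, Fin.sum_univ_castSucc, -Finset.sum_boole]

end OrderStatistic

section Exchangeability

lemma natCast_mul_measure_univ_le_sum_measure {Ω ι : Type*} [MeasurableSpace Ω] [Fintype ι]
    (μ : Measure Ω) {p : ι → Ω → Prop} [∀ j, DecidablePred (p j)]
    (hp : ∀ j, MeasurableSet {ω | p j ω}) {k : ℕ} (hk : ∀ ω, k ≤ #{j | p j ω}) :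
    k * μ Set.univ ≤ ∑ j, μ {ω | p j ω} := by
  have hcount (ω : Ω) : (#{j | p j ω} : ℝ≥0∞) = ∑ j, {ω | p j ω}.indicator 1 ω := by
    simp [Set.indicator_apply]
  calc k * μ Set.univ = ∫⁻ _, k ∂μ := by rw [lintegral_const]
    _ ≤ ∫⁻ ω, ∑ j, {ω | p j ω}.indicator 1 ω ∂μ :=
      lintegral_mono fun ω => by simpa only [← hcount] using Nat.cast_le.2 (hk ω)
    _ = ∑ j, μ {ω | p j ω} := by
      rw [lintegral_finsetSum _ fun j _ => measurable_one.indicator (hp j)]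
      simp only [lintegral_indicator_one (hp _)]

variable {ι α : Type*} [Fintype ι] [LinearOrder α] [MeasurableSpace α] [TopologicalSpace α]
  [OpensMeasurableSpace α] [OrderClosedTopology α] [SecondCountableTopology α]
  {μ : Measure (ι → α)}

lemma measure_tupleRank_lt_eq (hμ : ∀ π : Equiv.Perm ι, MeasurePreserving (· ∘ π) μ μ)
    (i j : ι) (k : ℕ) : μ {x | tupleRank x i < k} = μ {x | tupleRank x j < k} := by
  classical
  rw [← (hμ (Equiv.swap i j)).measure_preimage
    (measurableSet_tupleRank_lt j k).nullMeasurableSet]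
  simp [tupleRank_comp_equiv]

lemma natCast_mul_measure_univ_le_card_mul_measure_tupleRank_lt
    (hμ : ∀ π : Equiv.Perm ι, MeasurePreserving (· ∘ π) μ μ) {k : ℕ} (hk : k ≤ Fintype.card ι)
    (j : ι) : k * μ Set.univ ≤ Fintype.card ι * μ {x | tupleRank x j < k} := by
  calc k * μ Set.univ ≤ ∑ i, μ {x | tupleRank x i < k} :=
        natCast_mul_measure_univ_le_sum_measure μ
          (p := fun i x => tupleRank x i < k) (measurableSet_tupleRank_lt · k)
          fun x => le_card_tupleRank_lt x hk
    _ = Fintype.card ι * μ {x | tupleRank x j < k} := by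
      simp [measure_tupleRank_lt_eq hμ _ j]

variable {Ω : Type*} [MeasurableSpace Ω] {P : Measure Ω}

lemma Exchangeable.measurePreserving_comp_perm {n : ℕ} {s : Fin n → Ω → ℝ}
    (hs : ∀ i, AEMeasurable (s i) P) (h : Exchangeable P s) (π : Equiv.Perm (Fin n)) :
    MeasurePreserving (· ∘ π) (P.map fun ω i => s i ω) (P.map fun ω i => s i ω) := by
  have hπ : Measurable fun x : Fin n → ℝ => x ∘ π :=
    measurable_pi_lambda _ fun i => measurable_pi_apply (π i)
  refine ⟨hπ, ?_⟩
  rw [AEMeasurable.map_map_of_aemeasurable hπ.aemeasurable (aemeasurable_pi_lambda _ hs)]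
  exact h π

lemma Exchangeable.natCast_mul_measure_univ_le_mul_measure_le_kthSmallest
    {N : ℕ} {s : Fin (N + 1) → Ω → ℝ} (hs : ∀ i, AEMeasurable (s i) P) (h : Exchangeable P s)
    {k : ℕ} (hk : 1 ≤ k) (hkN : k ≤ N) :
    k * P Set.univ ≤ (N + 1) * P {ω | s (Fin.last N) ω ≤
      kthSmallest (List.ofFn fun i : Fin N => s i.castSucc ω) k} := by
  have hS : AEMeasurable (fun ω i => s i ω) P := aemeasurable_pi_lambda _ hs
  have hrank := natCast_mul_measure_univ_le_card_mul_measure_tupleRank_lt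
    (h.measurePreserving_comp_perm hs) (hkN.trans (by simp)) (Fin.last N)
  rw [Measure.map_apply_of_aemeasurable hS .univ, Measure.map_apply_of_aemeasurable hS
    (measurableSet_tupleRank_lt _ k)] at hrank
  simpa [← le_kthSmallest_ofFn_castSucc_iff _ hk hkN] using hrank

end Exchangeability

theorem quantile_lemma_general
    {Ω : Type*} [MeasurableSpace Ω] (P : Measure Ω)
    (N : ℕ) (s : Fin (N + 1) → Ω → ℝ) (hmeas : ∀ i, AEMeasurable (s i) P)
    (hexch : Exchangeable P s)
    (α : ℝ) (hα1 : α < 1) (hαN : 1 / ((N : ℝ) + 1) ≤ α) :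
    ENNReal.ofReal (1 - α) * P Set.univ ≤
      P {ω | s (Fin.last N) ω ≤
        kthSmallest (List.ofFn fun i : Fin N => s i.castSucc ω)
          ⌈(1 - α) * ((N : ℝ) + 1)⌉₊} := by
  have hN : (0 : ℝ) < N + 1 := by positivity
  set k := ⌈(1 - α) * ((N : ℝ) + 1)⌉₊
  have hk : 1 ≤ k := Nat.ceil_pos.2 (mul_pos (sub_pos.2 hα1) hN)
  have hkN : k ≤ N := by
    rw [div_le_iff₀ hN] at hαN
    exact Nat.ceil_le.2 (by linarith)
  have hαk : (N + 1 : ℝ≥0∞) * ENNReal.ofReal (1 - α) ≤ k := by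
    rw [mul_comm, ← Nat.cast_succ, ← ENNReal.ofReal_natCast, ← ENNReal.ofReal_mul (by linarith),
      ENNReal.ofReal_le_natCast, Nat.cast_succ]
    exact Nat.le_ceil _
  refine (ENNReal.mul_le_mul_iff_right (a := N + 1) (by simp) (by finiteness)).1 ?_
  rw [← mul_assoc]
  exact (mul_le_mul_left hαk _).trans
    (hexch.natCast_mul_measure_univ_le_mul_measure_le_kthSmallest hmeas hk hkN)

/-- Quantile lemma: if `s 1, …, s (N+1)` are exchangeable and `α ∈ (0,1)` with
`α ≥ 1/(N+1)`, then with `k = ⌈(1-α)(N+1)⌉` and `Q` the `k`-th smallest among the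
first `N` variables, `Pr(s (N+1) ≤ Q) ≥ 1 - α`. -/
theorem quantile_lemma
    {Ω : Type*} [MeasurableSpace Ω] (P : Measure Ω) [IsProbabilityMeasure P]
    (N : ℕ) (s : Fin (N + 1) → Ω → ℝ) (hmeas : ∀ i, Measurable (s i))
    (hexch : Exchangeable P s)
    (α : ℝ) (hα0 : 0 < α) (hα1 : α < 1) (hαN : 1 / ((N : ℝ) + 1) ≤ α) :
    ENNReal.ofReal (1 - α) ≤
      P {ω | s (Fin.last N) ω ≤
        kthSmallest (List.ofFn fun i : Fin N => s i.castSucc ω)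
          ⌈(1 - α) * ((N : ℝ) + 1)⌉₊} := by
  simpa using quantile_lemma_general P N s (fun i => (hmeas i).aemeasurable) hexch α hα1 hαN
end

section
/- (Calibration of QCP for quantum data classification) Fix integers C ≥ 1, d ≥ 1, M ≥ 1, N ≥ 1. For each label y ∈ {1, …, C}, let ρ(y) be a d × d complex density matrix (positive semidefinite with trace 1), and let P_1, …, P_C be d × d positive semidefinite complex matrices with P_1 + ⋯ + P_C equal to the identity (a POVM). Let p be a probability distribution on {1, …, C}. Let the test label y and the calibration labels y_1, …, y_N be i.i.d. with distribution p; conditionally independently given the labels, for the test point draw M i.i.d. outcomes ŷ^1, …, ŷ^M ∈ {1, …, C} with Pr(ŷ^m = j) = Tr(P_j ρ(y)), and for each calibration point i draw M i.i.d. outcomes ŷ_i^1, …, ŷ_i^M with Pr(ŷ_i^m = j) = Tr(P_j ρ(y_i)). Define the score of a label c given outcomes (ŷ^1, …, ŷ^M) as M divided by #{ m : ŷ^m = c }, taken to be +∞ when the count is zero. For α ∈ (0,1) with α ≥ 1/(N+1), let Q_{1−α} be the ⌈(1−α)(N+1)⌉-th smallest value among the N calibration scores (scores of y_i given (ŷ_i^1,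 …, ŷ_i^M)), computed in the extended reals. Define Γ_M = { c ∈ {1, …, C} : score of c given (ŷ^1, …, ŷ^M) ≤ Q_{1−α} }. Then Pr( y ∈ Γ_M ) ≥ 1 − α, where the probability is over the test label, the calibration labels, and all measurement outcomes. -/
open MeasureTheory
open scoped ENNReal Classical ComplexOrder

/-- The `k`-th smallest value (counting multiplicities) of a list of extended
nonnegative reals: the `k`-th entry of the list sorted in nondecreasing order. -/
noncomputable def kthSmallestE (l : List ℝ≥0∞) (k : ℕ) : ℝ≥0∞ :=
  (l.mergeSort (fun a b => @decide (a ≤ b) (Classical.propDecidable _))).getD (k - 1) 0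

/-- The QCP histogram score of label `c` given `M` measurement outcomes: `M` divided
by the number of shots equal to `c` (equal to `+∞` when the count is zero, by the
`ℝ≥0∞` convention `a / 0 = ∞` for `a ≠ 0`). -/
noncomputable def histScore {C M : ℕ} (c : Fin C) (out : Fin M → Fin C) : ℝ≥0∞ :=
  (M : ℝ≥0∞) / ((Finset.univ.filter fun m : Fin M => out m = c).card : ℝ≥0∞)

/-!
Given the labels, each data point is drawn from the same Markov kernel, so the pairs
(label, outcomes) are i.i.d. and their joint law is exchangeable. The test score is at most the
`k`-th smallest calibration score exactly when fewer than `k` of the `N + 1` scores lie strictly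
below it. In any family of `N + 1` values at least `k` entries have this property, and by
exchangeability each index has it with the same probability, which is therefore at least
`k / (N + 1)`.
-/

open ProbabilityTheory

section Rank

theorem countP_ofFn {α : Type*} {n : ℕ} (f : Fin n → α) (P : α → Prop) [DecidablePred P] :
    (List.ofFn f).countP (P ·) = (Finset.univ.filter fun i => P (f i)).card := by
  induction n with
  | zero => simp
  | succ n ih =>
    rw [List.ofFn_succ, List.countP_cons, ih, Fin.card_filter_univ_succ]
    split_ifs <;> simp_all

variable {α : Type*} [LinearOrder α]

theorem le_getElem_iff_countP_lt_le {l : List α} (hl : l.Pairwise (· ≤ ·)) {k : ℕ}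
    (hk : k < l.length) (x : α) : x ≤ l[k] ↔ l.countP (· < x) ≤ k := by
  induction l generalizing k with
  | nil => simp at hk
  | cons a l ih =>
    obtain ⟨ha, hl⟩ := List.pairwise_cons.mp hl
    rcases lt_or_ge a x with hax | hxa
    · cases k with
      | zero => simp [hax]
      | succ k => simpa [hax] using ih hl (by simpa using hk)
    · have hx : ∀ b ∈ a :: l, x ≤ b := by
        simpa [hxa] using fun b hb => hxa.trans (ha b hb)
      have hcount : (a :: l).countP (· < x) = 0 := by
        simpa [List.countP_eq_zero] using hx
      simp [hcount, hx]

theorem le_kthSmallestE_iff {l : List ℝ≥0∞} {k : ℕ} (hk : k < l.length) (x : ℝ≥0∞) :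
    x ≤ kthSmallestE l (k + 1) ↔ l.countP (· < x) ≤ k := by
  set t := l.mergeSort fun a b => @decide (a ≤ b) (Classical.propDecidable _) with ht
  have hperm : t.Perm l := List.mergeSort_perm _ _
  have hsorted : t.Pairwise (· ≤ ·) := by
    refine (List.pairwise_mergeSort (fun a b c hab hbc => ?_) (fun a b => ?_) l).imp
      fun h => by simpa only [decide_eq_true_eq] using h
    · simp only [decide_eq_true_eq] at hab hbc ⊢
      exact hab.trans hbc
    · simpa only [Bool.or_eq_true, decide_eq_true_eq] using le_total a b
  have hkt : k < t.length := hperm.length_eq ▸ hk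
  rw [kthSmallestE, ← ht, Nat.add_sub_cancel, List.getD_eq_getElem _ _ hkt,
    le_getElem_iff_countP_lt_le hsorted hkt, hperm.countP_eq]

variable {ι ι' : Type*} [Fintype ι] [Fintype ι']

/-- The strict rank of the entry `s i` in the family `s`: the number of entries strictly below it.
Ties share the same rank, and the smallest entries have rank `0`. -/
def strictRank (s : ι → α) (i : ι) : ℕ :=
  (Finset.univ.filter fun j => s j < s i).card

theorem strictRank_comp_equiv (s : ι → α) (e : ι' ≃ ι) (i : ι') :
    strictRank (s ∘ e) i = strictRank s (e i) :=
  Finset.card_equiv e (by simp)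

theorem le_card_strictRank_lt (s : ι → α) {k : ℕ} (hk : k ≤ Fintype.card ι) :
    k ≤ (Finset.univ.filter fun i => strictRank s i < k).card := by
  rcases (Finset.univ.filter fun i => k ≤ strictRank s i).eq_empty_or_nonempty with hempty | hne
  · simp_all [Finset.filter_eq_empty_iff]
  -- Every entry strictly below a smallest entry `s i` of rank at least `k` has rank less than `k`.
  · obtain ⟨i, hi, hmin⟩ := Finset.exists_min_image _ s hne
    simp only [Finset.mem_filter_univ] at hi hmin
    refine hi.trans (Finset.card_le_card fun j hj => ?_)
    simp only [Finset.mem_filter_univ] at hj ⊢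
    exact not_le.mp fun h => (hmin j h).not_gt hj

theorem last_le_kthSmallestE_iff {N k : ℕ} (s : Fin (N + 1) → ℝ≥0∞) (hk : k < N) :
    s (Fin.last N) ≤ kthSmallestE (List.ofFn fun i : Fin N => s i.castSucc) (k + 1) ↔
      strictRank s (Fin.last N) < k + 1 := by
  rw [le_kthSmallestE_iff (by simpa using hk), countP_ofFn, strictRank,
    Nat.lt_succ_iff]
  simp only [Finset.card_filter, Fin.sum_univ_castSucc, lt_irrefl, if_false, add_zero]

end Rank

section Exchangeable

variable {ι Ω α : Type*} [Fintype ι] [MeasurableSpace Ω]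

/-- A measure on families `ι → Ω` is exchangeable if it is invariant under every permutation of
the indices. -/
def IsExchangeable (μ : Measure (ι → Ω)) : Prop :=
  ∀ σ : Equiv.Perm ι, MeasurePreserving (fun w => w ∘ σ) μ μ

theorem isExchangeable_pi (ν : Measure Ω) [SigmaFinite ν] :
    IsExchangeable (Measure.pi fun _ : ι => ν) := fun σ => by
  convert measurePreserving_piCongrLeft (fun _ : ι => ν) σ.symm using 1
  ext w i
  simp [MeasurableEquiv.coe_piCongrLeft, Equiv.piCongrLeft_apply_eq_cast]

variable [LinearOrder α] [TopologicalSpace α] [OrderClosedTopology α] [SecondCountableTopology α]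
  [MeasurableSpace α] [OpensMeasurableSpace α] {f : Ω → α}

theorem measurableSet_strictRank_lt (hf : Measurable f) (i : ι) (k : ℕ) :
    MeasurableSet {w : ι → Ω | strictRank (f ∘ w) i < k} := by
  simp only [strictRank, Finset.card_filter, Function.comp_apply]
  refine measurableSet_lt (Finset.measurable_sum _ fun j _ => ?_) measurable_const
  exact .ite (measurableSet_lt (by fun_prop) (by fun_prop)) measurable_const measurable_const

theorem IsExchangeable.measure_strictRank_lt_eq {μ : Measure (ι → Ω)} (hμ : IsExchangeable μ)
    (hf : Measurable f) (k : ℕ) (i j : ι) :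
    μ {w | strictRank (f ∘ w) i < k} = μ {w | strictRank (f ∘ w) j < k} := by
  rw [← (hμ (Equiv.swap i j)).measure_preimage
    (measurableSet_strictRank_lt hf i k).nullMeasurableSet]
  simp [← Function.comp_assoc, strictRank_comp_equiv]

theorem IsExchangeable.le_card_mul_measure_strictRank_lt {μ : Measure (ι → Ω)}
    (hμ : IsExchangeable μ) (hf : Measurable f) {k : ℕ} (hk : k ≤ Fintype.card ι) (i : ι) :
    k * μ Set.univ ≤ Fintype.card ι * μ {w | strictRank (f ∘ w) i < k} := by
  let A (j : ι) : Set (ι → Ω) := {w | strictRank (f ∘ w) j < k}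
  have hA (j : ι) : MeasurableSet (A j) := measurableSet_strictRank_lt hf j k
  calc k * μ Set.univ = ∫⁻ _, k ∂μ := (lintegral_const _).symm
    _ ≤ ∫⁻ w, ∑ j, (A j).indicator 1 w ∂μ := lintegral_mono fun w => by
        simpa [A, Set.indicator_apply] using le_card_strictRank_lt (f ∘ w) hk
    _ = ∑ j, μ (A j) := by
        rw [lintegral_finsetSum _ fun j _ => measurable_one.indicator (hA j)]
        simp only [lintegral_indicator_one (hA _)]
    _ = Fintype.card ι * μ (A i) := by
        simp [A, hμ.measure_strictRank_lt_eq hf k _ i]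

theorem IsExchangeable.div_le_measure_le_kthSmallestE {N k : ℕ} {μ : Measure (Fin (N + 1) → Ω)}
    [IsProbabilityMeasure μ] (hμ : IsExchangeable μ) {f : Ω → ℝ≥0∞} (hf : Measurable f)
    (hk : k ≤ N) :
    (k / (N + 1) : ℝ≥0∞) ≤ μ {w | f (w (Fin.last N)) ≤
      kthSmallestE (List.ofFn fun i : Fin N => f (w i.castSucc)) k} := by
  cases k with
  | zero => simp
  | succ k =>
    refine ENNReal.div_le_of_le_mul' ?_
    simpa [← last_le_kthSmallestE_iff (f ∘ _) hk] using
      hμ.le_card_mul_measure_strictRank_lt hf (k := k + 1) (by simp; lia) (Fin.last N)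

end Exchangeable

section ProductKernel

variable {ι : Type*} [Fintype ι] {X Y : ι → Type*} [∀ i, MeasurableSpace (X i)]
  [∀ i, MeasurableSpace (Y i)] (p : ∀ i, Measure (X i)) [∀ i, IsProbabilityMeasure (p i)]
  (κ : ∀ i, Kernel (X i) (Y i)) [∀ i, IsMarkovKernel (κ i)]

theorem measurable_pi_kernel :
    Measurable fun x : ∀ i, X i => Measure.pi fun i => κ i (x i) := by
  refine .measure_of_isPiSystem_of_isProbabilityMeasure generateFrom_pi.symm isPiSystem_pi ?_
  rintro _ ⟨s, hs, rfl⟩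
  simp only [Measure.pi_pi]
  exact Finset.measurable_prod _ fun i _ =>
    ((κ i).measurable_coe (hs i trivial)).comp (measurable_pi_apply i)

theorem pi_bind_pi_kernel :
    ((Measure.pi p).bind fun x => Measure.pi fun i => κ i (x i)) =
      Measure.pi fun i => κ i ∘ₘ p i := by
  refine (Measure.pi_eq fun s hs => ?_).symm
  have hκ (i : ι) : Measurable fun x => κ i x (s i) := (κ i).measurable_coe (hs i)
  calc ((Measure.pi p).bind fun x => Measure.pi fun i => κ i (x i)) (Set.univ.pi s)
      = ∫⁻ x, ∏ i, κ i (x i) (s i) ∂Measure.pi p := by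
        rw [Measure.bind_apply (.univ_pi hs) (measurable_pi_kernel κ).aemeasurable]
        simp only [Measure.pi_pi]
    _ = ∏ i, ∫⁻ x, κ i (x i) (s i) ∂Measure.pi p :=
        lintegral_prod_eq_prod_lintegral_of_indepFun _ _
          (iIndepFun_pi fun i => (hκ i).aemeasurable)
          fun i => (hκ i).comp (measurable_pi_apply i)
    _ = ∏ i, (κ i ∘ₘ p i) (s i) := by
        simp only [(measurePreserving_eval p _).lintegral_comp (hκ _),
          Measure.bind_apply (hs _) (κ _).aemeasurable]

theorem pi_bind_map_pi_kernel :
    ((Measure.pi p).bind fun x =>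
      (Measure.pi fun i => κ i (x i)).map fun (y : ∀ i, Y i) i => (x i, y i)) =
      Measure.pi fun i => p i ⊗ₘ κ i := by
  simp only [Measure.compProd_eq_comp_prod, ← pi_bind_pi_kernel, Kernel.prod_apply,
    Kernel.id_apply, Measure.dirac_prod]
  congr with x : 1
  exact Measure.pi_map_pi fun i => measurable_prodMk_left.aemeasurable

end ProductKernel

theorem ceil_one_sub_mul_add_one_le {N : ℕ} {α : ℝ} (hα : 1 / ((N : ℝ) + 1) ≤ α) :
    ⌈(1 - α) * ((N : ℝ) + 1)⌉₊ ≤ N := by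
  rw [div_le_iff₀ (by positivity)] at hα
  exact Nat.ceil_le.mpr (by linarith)

theorem ofReal_le_ceil_mul_div {n : ℕ} (hn : n ≠ 0) (a : ℝ) :
    ENNReal.ofReal a ≤ (⌈a * n⌉₊ / n : ℝ≥0∞) := by
  rw [ENNReal.le_div_iff_mul_le (by simp [hn]) (by simp), ← ENNReal.ofReal_natCast n,
    ← ENNReal.ofReal_mul' n.cast_nonneg]
  exact ENNReal.ofReal_le_of_le_toReal (by simpa using Nat.le_ceil _)

theorem qcp_quantum_classification_calibration_general
    {X Y : Type*} [MeasurableSpace X] [MeasurableSpace Y] (N : ℕ)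
    (p : Measure X) [IsProbabilityMeasure p] (κ : Kernel X Y) [IsMarkovKernel κ]
    {score : X × Y → ℝ≥0∞} (hscore : Measurable score)
    {α : ℝ} (hα : 1 / ((N : ℝ) + 1) ≤ α) :
    ENNReal.ofReal (1 - α) ≤
      ((Measure.pi fun _ : Fin (N + 1) => p).bind fun x =>
        (Measure.pi fun i => κ (x i)).map fun (y : Fin (N + 1) → Y) i => (x i, y i))
      {w | score (w (Fin.last N)) ≤
        kthSmallestE (List.ofFn fun i : Fin N => score (w i.castSucc))
          ⌈(1 - α) * ((N : ℝ) + 1)⌉₊} := by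
  rw [pi_bind_map_pi_kernel (fun _ => p) fun _ => κ]
  calc ENNReal.ofReal (1 - α) ≤ (⌈(1 - α) * ((N : ℝ) + 1)⌉₊ / (N + 1) : ℝ≥0∞) := by
        exact_mod_cast ofReal_le_ceil_mul_div N.succ_ne_zero (1 - α)
    _ ≤ _ := (isExchangeable_pi (p ⊗ₘ κ)).div_le_measure_le_kthSmallestE hscore
        (ceil_one_sub_mul_add_one_le hα)

/-- Calibration of QCP for quantum data classification: states `ρ y` are density
matrices, `P_1, …, P_C` a POVM, labels i.i.d. with law `p`, and, conditionally
independently given the labels, each point receives `M` i.i.d. measurement outcomes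
with the Born-rule distribution `q y {j} = Tr(P_j ρ(y))`. With the histogram score
and `Q` the `⌈(1-α)(N+1)⌉`-th smallest calibration score (in the extended reals),
the QCP set `Γ_M = {c | score of c ≤ Q}` contains the test label with probability
at least `1 - α`. -/
theorem qcp_quantum_classification_calibration
    (C d M N : ℕ) (hC : 1 ≤ C) (hd : 1 ≤ d) (hM : 1 ≤ M) (hN : 1 ≤ N)
    (ρ : Fin C → Matrix (Fin d) (Fin d) ℂ)
    (hρpsd : ∀ y, (ρ y).PosSemidef) (hρtr : ∀ y, (ρ y).trace = 1)
    (Pm : Fin C → Matrix (Fin d) (Fin d) ℂ)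
    (hPmpsd : ∀ j, (Pm j).PosSemidef) (hPsum : ∑ j, Pm j = 1)
    (p : Measure (Fin C)) [IsProbabilityMeasure p]
    (q : Fin C → Measure (Fin C)) (hq : ∀ y, IsProbabilityMeasure (q y))
    (hBorn : ∀ y j, q y {j} = ENNReal.ofReal ((Pm j * ρ y).trace.re))
    (α : ℝ) (hα0 : 0 < α) (hα1 : α < 1) (hαN : 1 / ((N : ℝ) + 1) ≤ α) :
    ENNReal.ofReal (1 - α) ≤
      ((Measure.pi fun _ : Fin (N + 1) => p).bind fun ys =>
        Measure.map
          (fun (out : Fin (N + 1) → Fin M → Fin C) (i : Fin (N + 1)) => (ys i, out i))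
          (Measure.pi fun i => Measure.pi fun _ : Fin M => q (ys i)))
      {w : Fin (N + 1) → Fin C × (Fin M → Fin C) |
        histScore (w (Fin.last N)).1 (w (Fin.last N)).2 ≤
          kthSmallestE
            (List.ofFn fun i : Fin N => histScore (w i.castSucc).1 (w i.castSucc).2)
            ⌈(1 - α) * ((N : ℝ) + 1)⌉₊} := by
  let κ : Kernel (Fin C) (Fin M → Fin C) :=
    ⟨fun y => Measure.pi fun _ => q y, measurable_of_countable _⟩
  have : IsMarkovKernel κ := ⟨fun y => inferInstanceAs (IsProbabilityMeasure (Measure.pi _))⟩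
  exact qcp_quantum_classification_calibration_general N p κ
    (score := fun z => histScore z.1 z.2) (measurable_of_countable _) hαN
end
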